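/- Let α₀ and β₀ be real quadratic irrationals. Then (i) for every γ ∈ PSL₂(ℤ) fixing α₀ and every β ∈ PSL₂(ℤ)·β₀ ∖ {α₀, α₀^σ}, one has γ·β ∉ {α₀, α₀^σ} and H_{α₀}(γ·β) = H_{α₀}(β); and (ii) for every s > 0, the set {β ∈ PSL₂(ℤ)·β₀ ∖ {α₀, α₀^σ} : H_{α₀}(β) ≤ s} meets only finitely many orbits of the stabiliser PSL₂(ℤ)_{α₀} of α₀. -/

import Mathlib

/-!
Let `f = aX² + bXY + cY²` be an integral form with root `β`, of discriminant `D`, and let `α'`, `β'`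
be the conjugates of `α`, `β`. Put `p = a(α - β)(α' - β')` and `q = a(α - β')(α' - β)`. Then
`|p - q| = √D |α - α'|` and `H_α(β) = min(|p|, |q|) / |p - q|`, so a bound on the height bounds both
`p` and `q`, hence the product `f(α) f(α') = p q` and the polar value `f(α, α') = p + q`.
By Pell's equation, `α` is fixed by a hyperbolic integral matrix; its powers rescale `f(α)`
geometrically, so up to the stabiliser of `α` one may assume that `f(α)` lies in a fixed compact
interval of `(0, ∞)` in absolute value. Then `f(α)`, `f(α')` and `f(α, α')` are all bounded. These
three values determine `f` linearly, which leaves finitely many integral forms `f`.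
-/

open scoped Classical

/-- `α` is a real quadratic irrational: an irrational real number which is the root of a
quadratic polynomial with rational coefficients. -/
def IsQuadIrr (α : ℝ) : Prop :=
  Irrational α ∧ ∃ a b c : ℚ, a ≠ 0 ∧ (a : ℝ) * α ^ 2 + (b : ℝ) * α + (c : ℝ) = 0

/-- `σ` is the Galois conjugate of the real quadratic irrational `α`: the other root of
its minimal (quadratic) polynomial over `ℚ`. -/
def IsGalConj (α σ : ℝ) : Prop :=
  Irrational α ∧ σ ≠ α ∧
    ∃ a b c : ℚ, a ≠ 0 ∧ (a : ℝ) * α ^ 2 + (b : ℝ) * α + (c : ℝ) = 0 ∧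
      (a : ℝ) * σ ^ 2 + (b : ℝ) * σ + (c : ℝ) = 0

/-- The Galois conjugate `α^σ` of a real quadratic irrational `α` (junk value `0` if `α`
is not a real quadratic irrational). -/
noncomputable def galConj (α : ℝ) : ℝ :=
  if h : ∃ σ, IsGalConj α σ then h.choose else 0

/-- The height `H(α) = 2/|α − α^σ|` of a real quadratic irrational `α`. -/
noncomputable def qiHeight (α : ℝ) : ℝ := 2 / |α - galConj α|

/-- The action of `SL₂(ℤ)` (inducing the action of `PSL₂(ℤ)`) on real numbers by
homographies: the matrix `(a b; c d)` sends `x` to `(a·x+b)/(c·x+d)`. -/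
noncomputable def mob (A : Matrix.SpecialLinearGroup (Fin 2) ℤ) (x : ℝ) : ℝ :=
  ((A.1 0 0 : ℝ) * x + (A.1 0 1 : ℝ)) / ((A.1 1 0 : ℝ) * x + (A.1 1 1 : ℝ))

/-- The orbit `PSL₂(ℤ)·α₀` of a real number under the homography action. -/
def mobOrbit (α₀ : ℝ) : Set ℝ := {α | ∃ A, mob A α₀ = α}

/-- The Golden Ratio `φ = (1+√5)/2`. -/
noncomputable def goldenRat : ℝ := (1 + Real.sqrt 5) / 2

/-- The approximation constant `c(y)` of `y` by the elements of `Z` (with the height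
function `H = qiHeight`): the liminf of `H(α)·|y − α|` as `α` ranges over `Z` along the
Fréchet filter, i.e. the sup over finite subsets `F` of the inf over `α ∈ Z ∖ F` of
`H(α)·|y − α|`. -/
noncomputable def approxConst (Z : Set ℝ) (y : ℝ) : ℝ :=
  ⨆ F : Finset ℝ, ⨅ α : {α : ℝ // α ∈ Z ∧ α ∉ F}, qiHeight α.1 * |y - α.1|

/-- The Lagrange spectrum for the approximation of the elements of
`ℝ ∖ (ℚ ∪ Z)` by the elements of `Z`. -/
noncomputable def lagrangeSpectrum (Z : Set ℝ) : Set ℝ :=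
  approxConst Z '' {y : ℝ | Irrational y ∧ y ∉ Z}

/-- The crossratio `[a,b,c,d] = ((c−a)(d−b))/((c−b)(d−a))` of four pairwise distinct
real numbers. -/
noncomputable def crossRatio (a b c d : ℝ) : ℝ := ((c - a) * (d - b)) / ((c - b) * (d - a))

/-- The relative height `H_{α₀}(β)` of a real quadratic irrational `β ∉ {α₀, α₀^σ}`
with respect to `α₀`. -/
noncomputable def relHeight (α₀ β : ℝ) : ℝ :=
  1 / max |crossRatio α₀ β (galConj α₀) (galConj β)|
      |crossRatio α₀ (galConj β) (galConj α₀) β|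

lemma eq_zero_and_eq_zero_of_mul_irrational_add_eq_zero {x : ℝ} (hx : Irrational x) {p q : ℚ}
    (h : (p : ℝ) * x + q = 0) : p = 0 ∧ q = 0 := by
  have hp : p = 0 := by
    by_contra hp
    exact ((hx.ratCast_mul hp).add_ratCast q).ne_zero h
  subst hp
  exact ⟨rfl, by simpa using h⟩

section Homography

open scoped MatrixGroups

variable {A B : SL(2, ℤ)} {x y z w : ℝ}

/-- The automorphy factor `c·x + d` of the homography with matrix `A = (a b; c d)`, that is, the
denominator of `mob A x`. When `A` fixes `x`, it is the eigenvalue of `A` on the vector `(x, 1)`. -/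
def mobDenom (A : SL(2, ℤ)) (x : ℝ) : ℝ := (A.1 1 0 : ℝ) * x + (A.1 1 1 : ℝ)

lemma det_fin_two_intCast (A : SL(2, ℤ)) :
    (A.1 0 0 : ℝ) * A.1 1 1 - (A.1 0 1 : ℝ) * A.1 1 0 = 1 := by
  have hdet := A.det_coe
  rw [Matrix.det_fin_two] at hdet
  exact_mod_cast hdet

lemma mobDenom_ne_zero (A : SL(2, ℤ)) (hx : Irrational x) : mobDenom A x ≠ 0 := by
  intro h
  obtain ⟨hc, hd⟩ := eq_zero_and_eq_zero_of_mul_irrational_add_eq_zero hx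
    (p := A.1 1 0) (q := A.1 1 1) (by exact_mod_cast h)
  have hdet := A.det_coe
  rw [Matrix.det_fin_two, Int.cast_eq_zero.1 hc, Int.cast_eq_zero.1 hd] at hdet
  simp at hdet

lemma mob_mul_mobDenom (A : SL(2, ℤ)) (hx : Irrational x) :
    mob A x * mobDenom A x = A.1 0 0 * x + A.1 0 1 :=
  div_mul_cancel₀ _ (mobDenom_ne_zero A hx)

lemma irrational_mob (A : SL(2, ℤ)) (hx : Irrational x) : Irrational (mob A x) := by
  rintro ⟨r, hr⟩
  have hmul := mob_mul_mobDenom A hx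
  rw [← hr, mobDenom] at hmul
  obtain ⟨ha, hb⟩ := eq_zero_and_eq_zero_of_mul_irrational_add_eq_zero hx
    (p := r * A.1 1 0 - A.1 0 0) (q := r * A.1 1 1 - A.1 0 1)
    (by push_cast; linear_combination hmul)
  have hdet : (A.1 0 0 : ℚ) * A.1 1 1 - A.1 0 1 * A.1 1 0 = 1 := by
    exact_mod_cast det_fin_two_intCast A
  exact one_ne_zero (by linear_combination -hdet - (A.1 1 1 : ℚ) * ha + (A.1 1 0 : ℚ) * hb)

lemma mobDenom_mul (A B : SL(2, ℤ)) (hx : Irrational x) :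
    mobDenom (A * B) x = mobDenom A (mob B x) * mobDenom B x := by
  have hB := mob_mul_mobDenom B hx
  simp only [mobDenom, Matrix.SpecialLinearGroup.coe_mul, Matrix.mul_apply,
    Fin.sum_univ_two] at hB ⊢
  push_cast
  linear_combination -(A.1 1 0 : ℝ) * hB

lemma mob_mul (A B : SL(2, ℤ)) (hx : Irrational x) : mob (A * B) x = mob A (mob B x) := by
  have hB := mob_mul_mobDenom B hx
  have hA := mob_mul_mobDenom A (irrational_mob B hx)
  have hAB := mob_mul_mobDenom (A * B) hx
  refine mul_right_cancel₀ (mobDenom_ne_zero (A * B) hx) ?_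
  rw [hAB, mobDenom_mul A B hx, ← mul_assoc, hA]
  simp only [mobDenom, Matrix.SpecialLinearGroup.coe_mul, Matrix.mul_apply,
    Fin.sum_univ_two] at hB ⊢
  push_cast
  linear_combination -(A.1 0 0 : ℝ) * hB

@[simp]
lemma mob_one (x : ℝ) : mob 1 x = x := by simp [mob]

@[simp]
lemma mobDenom_one (x : ℝ) : mobDenom 1 x = 1 := by simp [mobDenom]

lemma mob_inv_mob (A : SL(2, ℤ)) (hx : Irrational x) : mob A⁻¹ (mob A x) = x := by
  rw [← mob_mul _ _ hx, inv_mul_cancel, mob_one]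

lemma mob_inj (hx : Irrational x) (hy : Irrational y) : mob A x = mob A y ↔ x = y :=
  ⟨fun h => by rw [← mob_inv_mob A hx, h, mob_inv_mob A hy], congrArg _⟩

lemma mob_inv_of_fixed (hx : Irrational x) (hA : mob A x = x) : mob A⁻¹ x = x := by
  simpa only [hA] using mob_inv_mob A hx

lemma mobDenom_inv_of_fixed (hx : Irrational x) (hA : mob A x = x) :
    mobDenom A⁻¹ x = (mobDenom A x)⁻¹ := by
  have h := mobDenom_mul A⁻¹ A hx
  rw [inv_mul_cancel, mobDenom_one, hA] at h
  exact eq_inv_of_mul_eq_one_left h.symm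

lemma mob_zpow_and_mobDenom_zpow_of_fixed (hx : Irrational x) (hA : mob A x = x) (k : ℤ) :
    mob (A ^ k) x = x ∧ mobDenom (A ^ k) x = mobDenom A x ^ k := by
  have hne := mobDenom_ne_zero A hx
  induction k with
  | zero => simp
  | succ n ih =>
    rw [zpow_add_one, zpow_add_one₀ hne, mob_mul _ _ hx, mobDenom_mul _ _ hx, hA, ih.2]
    exact ⟨ih.1, rfl⟩
  | pred n ih =>
    rw [zpow_sub_one, zpow_sub_one₀ hne, mob_mul _ _ hx, mobDenom_mul _ _ hx,
      mob_inv_of_fixed hx hA, mobDenom_inv_of_fixed hx hA, ih.2]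
    exact ⟨ih.1, rfl⟩

lemma mob_sub_mob (A : SL(2, ℤ)) (hx : Irrational x) (hy : Irrational y) :
    mob A x - mob A y = (x - y) / (mobDenom A x * mobDenom A y) := by
  have hdx := mobDenom_ne_zero A hx
  have hdy := mobDenom_ne_zero A hy
  have hmx := mob_mul_mobDenom A hx
  have hmy := mob_mul_mobDenom A hy
  rw [eq_div_iff (mul_ne_zero hdx hdy)]
  calc (mob A x - mob A y) * (mobDenom A x * mobDenom A y)
      = mob A x * mobDenom A x * mobDenom A y - mob A y * mobDenom A y * mobDenom A x := by ring
    _ = x - y := by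
      rw [hmx, hmy, mobDenom, mobDenom]
      linear_combination (x - y) * det_fin_two_intCast A

lemma crossRatio_mob (A : SL(2, ℤ)) (hx : Irrational x) (hy : Irrational y) (hz : Irrational z)
    (hw : Irrational w) :
    crossRatio (mob A x) (mob A y) (mob A z) (mob A w) = crossRatio x y z w := by
  have hdx := mobDenom_ne_zero A hx
  have hdy := mobDenom_ne_zero A hy
  have hdz := mobDenom_ne_zero A hz
  have hdw := mobDenom_ne_zero A hw
  rw [crossRatio, crossRatio, mob_sub_mob A hz hx, mob_sub_mob A hw hy, mob_sub_mob A hz hy,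
    mob_sub_mob A hw hx]
  field_simp

end Homography

/-- The integral binary quadratic form `a X² + b XY + c Y²`, through which integral equations of
quadratic irrationals are transported by homographies. -/
@[ext]
structure BinQuadForm where
  a : ℤ
  b : ℤ
  c : ℤ

namespace BinQuadForm

open scoped MatrixGroups

/-- The discriminant `b² - 4ac` of a form. -/
def discr (f : BinQuadForm) : ℤ := discrim f.a f.b f.c

/-- The dehomogenised value `f(x, 1)` of a form. -/
def eval (f : BinQuadForm) (x : ℝ) : ℝ := f.a * x ^ 2 + f.b * x + f.c

/-- The polar form of `f` at `(x, 1)` and `(y, 1)`, normalised so that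
`f.polar x x = 2 * f.eval x`. -/
def polar (f : BinQuadForm) (x y : ℝ) : ℝ := 2 * f.a * x * y + f.b * (x + y) + 2 * f.c

/-- The form `f ∘ A⁻¹`, whose roots are the images under `mob A` of the roots of `f`. -/
def map (A : SL(2, ℤ)) (f : BinQuadForm) : BinQuadForm where
  a := f.a * A.1 1 1 ^ 2 - f.b * A.1 1 1 * A.1 1 0 + f.c * A.1 1 0 ^ 2
  b := -2 * f.a * A.1 1 1 * A.1 0 1 + f.b * (A.1 1 1 * A.1 0 0 + A.1 0 1 * A.1 1 0)
    - 2 * f.c * A.1 1 0 * A.1 0 0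
  c := f.a * A.1 0 1 ^ 2 - f.b * A.1 0 1 * A.1 0 0 + f.c * A.1 0 0 ^ 2

/-- `x` is an irrational root of the nonzero form `f`. For an irrational root, `f ≠ 0`, `f.a ≠ 0`
and `f.discr ≠ 0` are equivalent; the last one is visibly preserved by `map`. -/
structure HasIrrationalRoot (f : BinQuadForm) (x : ℝ) : Prop where
  irrational : Irrational x
  eval_eq_zero : f.eval x = 0
  discr_ne_zero : f.discr ≠ 0

variable {f : BinQuadForm} {x y : ℝ}

lemma discr_map (A : SL(2, ℤ)) (f : BinQuadForm) : (f.map A).discr = f.discr := by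
  have hdet := A.det_coe
  rw [Matrix.det_fin_two] at hdet
  simp only [discr, discrim, map]
  linear_combination (f.b ^ 2 - 4 * f.a * f.c) *
    (A.1 0 0 * A.1 1 1 - A.1 0 1 * A.1 1 0 + 1) * hdet

lemma eval_map_mob_mul (A : SL(2, ℤ)) (f : BinQuadForm) (hx : Irrational x) :
    (f.map A).eval (mob A x) * mobDenom A x ^ 2 = f.eval x := by
  have hdet := det_fin_two_intCast A
  have hmul := mob_mul_mobDenom A hx
  -- `(x, 1)` is recovered from `(mob A x, 1)` by applying `A⁻¹` and rescaling.
  have hnum : (A.1 1 1 * mob A x - A.1 0 1) * mobDenom A x = x := by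
    rw [sub_mul, mul_assoc, hmul, mobDenom]
    linear_combination x * hdet
  have hden : (-A.1 1 0 * mob A x + A.1 0 0) * mobDenom A x = 1 := by
    rw [add_mul, mul_assoc, hmul, mobDenom]
    linear_combination hdet
  calc (f.map A).eval (mob A x) * mobDenom A x ^ 2
      = f.a * ((A.1 1 1 * mob A x - A.1 0 1) * mobDenom A x) ^ 2
        + f.b * ((A.1 1 1 * mob A x - A.1 0 1) * mobDenom A x)
          * ((-A.1 1 0 * mob A x + A.1 0 0) * mobDenom A x)
        + f.c * ((-A.1 1 0 * mob A x + A.1 0 0) * mobDenom A x) ^ 2 := by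
        simp only [eval, map]
        push_cast
        ring
    _ = f.eval x := by rw [hnum, hden, eval]; ring

lemma discr_eq_sq (h : f.eval x = 0) : (f.discr : ℝ) = (2 * f.a * x + f.b) ^ 2 := by
  rw [discr, discrim]
  push_cast
  rw [eval] at h
  linear_combination -4 * (f.a : ℝ) * h

namespace HasIrrationalRoot

lemma a_ne_zero (h : f.HasIrrationalRoot x) : f.a ≠ 0 := by
  intro ha
  have heval := h.eval_eq_zero
  simp only [eval, ha, Int.cast_zero, zero_mul, zero_add] at heval
  have hb := (eq_zero_and_eq_zero_of_mul_irrational_add_eq_zero h.irrational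
    (p := f.b) (q := f.c) (by exact_mod_cast heval)).1
  exact h.discr_ne_zero (by simp [discr, discrim, ha, Int.cast_eq_zero.1 hb])

lemma irrational_two_mul_add (h : f.HasIrrationalRoot x) :
    Irrational (2 * f.a * x + f.b) := by
  have := (h.irrational.intCast_mul (m := 2 * f.a) (by simp [h.a_ne_zero])).add_intCast f.b
  exact_mod_cast this

protected lemma map (h : f.HasIrrationalRoot x) (A : SL(2, ℤ)) :
    (f.map A).HasIrrationalRoot (mob A x) where
  irrational := irrational_mob A h.irrational
  eval_eq_zero := by
    have heval := eval_map_mob_mul A f h.irrational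
    rw [h.eval_eq_zero] at heval
    exact (mul_eq_zero.1 heval).resolve_right (pow_ne_zero _ (mobDenom_ne_zero A h.irrational))
  discr_ne_zero := by rw [discr_map]; exact h.discr_ne_zero

lemma isQuadIrr (h : f.HasIrrationalRoot x) : IsQuadIrr x :=
  ⟨h.irrational, f.a, f.b, f.c, by exact_mod_cast h.a_ne_zero, by exact_mod_cast h.eval_eq_zero⟩

lemma isGalConj (hx : f.HasIrrationalRoot x) (hy : f.HasIrrationalRoot y) (hne : y ≠ x) :
    IsGalConj x y :=
  ⟨hx.irrational, hne, f.a, f.b, f.c, by exact_mod_cast hx.a_ne_zero,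
    by exact_mod_cast hx.eval_eq_zero, by exact_mod_cast hy.eval_eq_zero⟩

lemma exists_ne (h : f.HasIrrationalRoot x) : ∃ y ≠ x, f.HasIrrationalRoot y := by
  have ha : (f.a : ℝ) ≠ 0 := by exact_mod_cast h.a_ne_zero
  have heval := h.eval_eq_zero
  rw [eval] at heval
  refine ⟨-f.b / f.a - x, fun hne => ?_, ?_, ?_, h.discr_ne_zero⟩
  · apply h.irrational_two_mul_add.ne_zero
    field_simp at hne
    linear_combination -hne
  · exact_mod_cast h.irrational.ratCast_sub (-f.b / f.a)
  · rw [eval, ← heval]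
    field_simp
    ring

end HasIrrationalRoot

end BinQuadForm

open BinQuadForm in
lemma IsQuadIrr.exists_hasIrrationalRoot {x : ℝ} (hx : IsQuadIrr x) :
    ∃ f : BinQuadForm, f.HasIrrationalRoot x := by
  obtain ⟨hirr, a, b, c, ha, h⟩ := hx
  let f : BinQuadForm := ⟨a.num * b.den * c.den, b.num * a.den * c.den, c.num * a.den * b.den⟩
  have hroot : f.eval x = 0 := by
    rw [Rat.cast_def a, Rat.cast_def b, Rat.cast_def c] at h
    field_simp at h
    simp only [eval, f]
    push_cast
    linear_combination h
  refine ⟨f, hirr, hroot, fun hD => ?_⟩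
  have hsq := discr_eq_sq hroot
  rw [hD, Int.cast_zero, eq_comm, sq_eq_zero_iff] at hsq
  have hfa := (eq_zero_and_eq_zero_of_mul_irrational_add_eq_zero hirr
    (p := 2 * f.a) (q := f.b) (by exact_mod_cast hsq)).1
  simp [f, ha] at hfa

lemma IsGalConj.unique {x σ τ : ℝ} (hσ : IsGalConj x σ) (hτ : IsGalConj x τ) : σ = τ := by
  obtain ⟨hx, hσx, a, b, c, ha, hfx, hfσ⟩ := hσ
  obtain ⟨-, hτx, a', b', c', ha', hgx, hgτ⟩ := hτ
  have hsum : (a : ℝ) * (σ + x) + b = 0 :=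
    mul_left_cancel₀ (sub_ne_zero.2 hσx) (by linear_combination hfσ - hfx)
  have hsum' : (a' : ℝ) * (τ + x) + b' = 0 :=
    mul_left_cancel₀ (sub_ne_zero.2 hτx) (by linear_combination hgτ - hgx)
  have hprop : a' * b - a * b' = 0 :=
    (eq_zero_and_eq_zero_of_mul_irrational_add_eq_zero hx (q := a' * c - a * c')
      (by push_cast; linear_combination (a' : ℝ) * hfx - (a : ℝ) * hgx)).1
  have hprop' : (a' : ℝ) * b - a * b' = 0 := by exact_mod_cast hprop
  have haa' : (a : ℝ) * a' ≠ 0 := by exact_mod_cast mul_ne_zero ha ha'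
  refine mul_left_cancel₀ haa' ?_
  linear_combination (a' : ℝ) * hsum - (a : ℝ) * hsum' - hprop'

lemma IsGalConj.galConj_eq {x σ : ℝ} (h : IsGalConj x σ) : galConj x = σ := by
  have hex : ∃ σ, IsGalConj x σ := ⟨σ, h⟩
  rw [galConj, dif_pos hex]
  exact hex.choose_spec.unique h

namespace BinQuadForm.HasIrrationalRoot

variable {f : BinQuadForm} {x y : ℝ}

lemma galConj_eq (hx : f.HasIrrationalRoot x) (hy : f.HasIrrationalRoot y) (hne : y ≠ x) :
    galConj x = y :=
  (hx.isGalConj hy hne).galConj_eq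

protected lemma galConj (h : f.HasIrrationalRoot x) : f.HasIrrationalRoot (galConj x) := by
  obtain ⟨y, hne, hy⟩ := h.exists_ne
  rwa [h.galConj_eq hy hne]

end BinQuadForm.HasIrrationalRoot

namespace IsQuadIrr

open scoped MatrixGroups

variable {x y : ℝ}

lemma galConj_ne (hx : IsQuadIrr x) : galConj x ≠ x := by
  obtain ⟨f, hf⟩ := hx.exists_hasIrrationalRoot
  obtain ⟨y, hne, hy⟩ := hf.exists_ne
  rwa [hf.galConj_eq hy hne]

lemma irrational_galConj (hx : IsQuadIrr x) : Irrational (galConj x) := by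
  obtain ⟨f, hf⟩ := hx.exists_hasIrrationalRoot
  exact hf.galConj.irrational

lemma galConj_galConj (hx : IsQuadIrr x) : galConj (galConj x) = x := by
  obtain ⟨f, hf⟩ := hx.exists_hasIrrationalRoot
  exact hf.galConj.galConj_eq hf hx.galConj_ne.symm

lemma galConj_eq_comm (hx : IsQuadIrr x) (hy : IsQuadIrr y) : galConj x = y ↔ x = galConj y :=
  ⟨fun h => by rw [← h, hx.galConj_galConj], fun h => by rw [h, hy.galConj_galConj]⟩

lemma galConj_inj (hx : IsQuadIrr x) (hy : IsQuadIrr y) : galConj x = galConj y ↔ x = y :=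
  ⟨fun h => by rw [← hx.galConj_galConj, h, hy.galConj_galConj], congrArg _⟩

lemma galConj_mob (hx : IsQuadIrr x) (A : SL(2, ℤ)) : galConj (mob A x) = mob A (galConj x) := by
  obtain ⟨f, hf⟩ := hx.exists_hasIrrationalRoot
  exact (hf.map A).galConj_eq (hf.galConj.map A)
    ((mob_inj hx.irrational_galConj hx.1).not.2 hx.galConj_ne)

lemma mob_galConj_of_fixed (hx : IsQuadIrr x) {A : SL(2, ℤ)} (hA : mob A x = x) :
    mob A (galConj x) = galConj x := by
  rw [← hx.galConj_mob, hA]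

end IsQuadIrr

namespace BinQuadForm

open scoped MatrixGroups

variable {f : BinQuadForm} {x : ℝ}

namespace HasIrrationalRoot

lemma b_eq (h : f.HasIrrationalRoot x) : (f.b : ℝ) = -f.a * (x + galConj x) := by
  have hx := h.eval_eq_zero
  have hx' := h.galConj.eval_eq_zero
  rw [eval] at hx hx'
  exact mul_left_cancel₀ (sub_ne_zero.2 h.isQuadIrr.galConj_ne) (by linear_combination hx' - hx)

lemma c_eq (h : f.HasIrrationalRoot x) : (f.c : ℝ) = f.a * (x * galConj x) := by
  have hx := h.eval_eq_zero
  rw [eval, h.b_eq] at hx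
  linear_combination hx

lemma eval_eq_mul (h : f.HasIrrationalRoot x) (y : ℝ) :
    f.eval y = f.a * (y - x) * (y - galConj x) := by
  rw [eval, h.b_eq, h.c_eq]
  ring

lemma sqrt_discr_eq (h : f.HasIrrationalRoot x) :
    √(f.discr : ℝ) = |(f.a : ℝ) * (x - galConj x)| := by
  rw [discr_eq_sq h.eval_eq_zero, Real.sqrt_sq_eq_abs, h.b_eq]
  congr 1
  ring

lemma eval_ne_zero (h : f.HasIrrationalRoot x) {y : ℝ} (hne : y ≠ x) (hne' : y ≠ galConj x) :
    f.eval y ≠ 0 := by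
  rw [h.eval_eq_mul]
  exact mul_ne_zero (mul_ne_zero (by exact_mod_cast h.a_ne_zero) (sub_ne_zero.2 hne))
    (sub_ne_zero.2 hne')

end HasIrrationalRoot

lemma finite_setOf_hasIrrationalRoot (f : BinQuadForm) : {x | f.HasIrrationalRoot x}.Finite := by
  rcases Set.eq_empty_or_nonempty {x | f.HasIrrationalRoot x} with hempty | ⟨x, hx⟩
  · rw [hempty]
    exact Set.finite_empty
  · refine (Set.toFinite {x, galConj x}).subset fun y hy => ?_
    by_contra hmem
    rw [Set.mem_insert_iff, Set.mem_singleton_iff, not_or] at hmem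
    exact HasIrrationalRoot.eval_ne_zero hx hmem.1 hmem.2 hy.eval_eq_zero

/-- The matrix is the automorph of `f` attached to the solution `(u, v)` of Pell's equation. -/
lemma HasIrrationalRoot.exists_fixing_mobDenom_eq (h : f.HasIrrationalRoot x) {u v : ℤ}
    (huv : u ^ 2 - f.discr * v ^ 2 = 1) :
    ∃ M : SL(2, ℤ), mob M x = x ∧ mobDenom M x = u + v * (2 * f.a * x + f.b) := by
  have heval := h.eval_eq_zero
  rw [eval] at heval
  let M : SL(2, ℤ) := ⟨!![u - f.b * v, -2 * f.c * v; 2 * f.a * v, u + f.b * v], by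
    rw [Matrix.det_fin_two_of]
    rw [discr, discrim] at huv
    linear_combination huv⟩
  have hden : mobDenom M x = u + v * (2 * f.a * x + f.b) := by
    simp only [mobDenom, M, Matrix.of_apply, Matrix.cons_val', Matrix.cons_val_zero,
      Matrix.cons_val_one, Matrix.cons_val_fin_one]
    push_cast
    ring
  refine ⟨M, mul_right_cancel₀ (mobDenom_ne_zero M h.irrational) ?_, hden⟩
  rw [mob_mul_mobDenom M h.irrational, hden]
  simp only [M, Matrix.of_apply, Matrix.cons_val', Matrix.cons_val_zero, Matrix.cons_val_one,
    Matrix.cons_val_fin_one]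
  push_cast
  linear_combination -2 * (v : ℝ) * heval

lemma HasIrrationalRoot.exists_fixing_one_lt_mobDenom (h : f.HasIrrationalRoot x) :
    ∃ M : SL(2, ℤ), mob M x = x ∧ 1 < mobDenom M x := by
  obtain ⟨hnsq, hnonneg⟩ : ¬IsSquare f.discr ∧ 0 ≤ f.discr := by
    rw [← irrational_sqrt_intCast_iff, discr_eq_sq h.eval_eq_zero, Real.sqrt_sq_eq_abs]
    rcases abs_choice (2 * f.a * x + f.b) with habs | habs <;> rw [habs]
    exacts [h.irrational_two_mul_add, h.irrational_two_mul_add.neg]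
  obtain ⟨a, hu, hv⟩ :=
    Pell.Solution₁.exists_pos_of_not_isSquare (hnonneg.lt_of_ne h.discr_ne_zero.symm) hnsq
  -- Conjugating the solution if necessary makes `v` and `2ax + b` have the same sign.
  obtain ⟨v, huv, hpos⟩ : ∃ v : ℤ, a.x ^ 2 - f.discr * v ^ 2 = 1 ∧
      0 < (v : ℝ) * (2 * f.a * x + f.b) := by
    have hy : (0 : ℝ) < a.y := by exact_mod_cast hv
    rcases h.irrational_two_mul_add.ne_zero.lt_or_gt with hneg | hpos
    · refine ⟨-a.y, by rw [neg_sq]; exact a.prop, ?_⟩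
      rw [Int.cast_neg]
      exact mul_pos_of_neg_of_neg (neg_neg_of_pos hy) hneg
    · exact ⟨a.y, a.prop, mul_pos hy hpos⟩
  obtain ⟨M, hM, hden⟩ := h.exists_fixing_mobDenom_eq huv
  have hu' : (1 : ℝ) < a.x := by exact_mod_cast hu
  exact ⟨M, hM, by linarith⟩

lemma eval_map_zpow_of_fixed {M : SL(2, ℤ)} (f : BinQuadForm) (hx : Irrational x)
    (hM : mob M x = x) (k : ℤ) :
    (f.map (M ^ k)).eval x * (mobDenom M x ^ 2) ^ k = f.eval x := by
  obtain ⟨hfix, hden⟩ := mob_zpow_and_mobDenom_zpow_of_fixed hx hM k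
  have h := eval_map_mob_mul (M ^ k) f hx
  rwa [hfix, hden, ← zpow_natCast, zpow_comm, zpow_natCast] at h

lemma exists_zpow_abs_eval_map_mem_Icc {M : SL(2, ℤ)} (hx : Irrational x) (hM : mob M x = x)
    (hden : 1 < mobDenom M x) (hf : f.eval x ≠ 0) :
    ∃ k : ℤ, |(f.map (M ^ k)).eval x| ∈ Set.Icc 1 (mobDenom M x ^ 2) := by
  have hden' : 1 < mobDenom M x ^ 2 := one_lt_pow₀ hden two_ne_zero
  obtain ⟨k, hlower, hupper⟩ := exists_mem_Ico_zpow (abs_pos.2 hf) hden'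
  have hpos : 0 < (mobDenom M x ^ 2) ^ k := by positivity
  rw [← eval_map_zpow_of_fixed f hx hM k, abs_mul, abs_of_pos hpos] at hlower hupper
  rw [zpow_add_one₀ (by positivity), mul_comm _ (mobDenom M x ^ 2)] at hupper
  exact ⟨k, (le_mul_iff_one_le_left hpos).1 hlower, (lt_of_mul_lt_mul_right hupper hpos.le).le⟩

lemma finite_setOf_abs_coeff_le (A B C : ℤ) :
    {f : BinQuadForm | |f.a| ≤ A ∧ |f.b| ≤ B ∧ |f.c| ≤ C}.Finite := by
  have hinj : Function.Injective fun f : BinQuadForm => (f.a, f.b, f.c) := by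
    intro f g h
    simpa only [Prod.mk.injEq, BinQuadForm.ext_iff] using h
  refine ((Set.finite_Icc (-A, -B, -C) (A, B, C)).preimage hinj.injOn).subset ?_
  rintro f ⟨ha, hb, hc⟩
  rw [abs_le] at ha hb hc
  exact ⟨⟨ha.1, hb.1, hc.1⟩, ha.2, hb.2, hc.2⟩

lemma finite_setOf_abs_eval_le_abs_polar_le {p q : ℝ} (hpq : p ≠ q) (L : ℝ) :
    {f : BinQuadForm | |f.eval p| ≤ L ∧ |f.eval q| ≤ L ∧ |f.polar p q| ≤ L}.Finite := by
  have hpos : 0 < (p - q) ^ 2 := by have := sub_ne_zero.2 hpq; positivity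
  let bound (u v w : ℝ) : ℤ := ⌊(|u| + |v| + |w|) * L / (p - q) ^ 2⌋
  refine (finite_setOf_abs_coeff_le (bound 1 1 (-1)) (bound (-2 * q) (-2 * p) (p + q))
    (bound (q ^ 2) (p ^ 2) (-(p * q)))).subset ?_
  rintro f ⟨hp, hq, hpolar⟩
  have hbound {n : ℤ} {u v w : ℝ}
      (hn : n * (p - q) ^ 2 = u * f.eval p + v * f.eval q + w * f.polar p q) :
      |n| ≤ bound u v w := by
    rw [Int.le_floor, Int.cast_abs, le_div_iff₀ hpos]
    calc |(n : ℝ)| * (p - q) ^ 2 = |u * f.eval p + v * f.eval q + w * f.polar p q| := by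
          rw [← hn, abs_mul, abs_of_pos hpos]
      _ ≤ |u| * |f.eval p| + |v| * |f.eval q| + |w| * |f.polar p q| := by
          simpa only [abs_mul] using
            abs_add_three (u * f.eval p) (v * f.eval q) (w * f.polar p q)
      _ ≤ |u| * L + |v| * L + |w| * L := by gcongr
      _ = (|u| + |v| + |w|) * L := by ring
  -- The three identities are the coefficients of
  -- `(p - q)² f(X, Y) = (X - qY)² f(p) + (pY - X)² f(q) + (X - qY)(pY - X) f(p, q)`.
  refine ⟨hbound ?_, hbound ?_, hbound ?_⟩ <;> rw [eval, eval, polar] <;> ring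

end BinQuadForm

section RelHeight

open BinQuadForm
open scoped MatrixGroups

variable {α β s : ℝ}

lemma relHeight_mob_of_fixed (hα : IsQuadIrr α) (hβ : IsQuadIrr β) {A : SL(2, ℤ)}
    (hA : mob A α = α) : relHeight α (mob A β) = relHeight α β := by
  have hcross := crossRatio_mob A hα.1 hβ.1 hα.irrational_galConj hβ.irrational_galConj
  have hcross' := crossRatio_mob A hα.1 hβ.irrational_galConj hα.irrational_galConj hβ.1
  rw [hA, hα.mob_galConj_of_fixed hA] at hcross hcross'
  rw [relHeight, hβ.galConj_mob, hcross, hcross', relHeight]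

lemma one_div_max_div_div {p q w : ℝ} (hp : 0 < p) (hq : 0 < q) (hw : 0 ≤ w) :
    1 / max (w / p) (w / q) = min p q / w := by
  rcases le_total p q with h | h
  · rw [max_eq_left (div_le_div_of_nonneg_left hw hp h), one_div_div, min_eq_left h]
  · rw [max_eq_right (div_le_div_of_nonneg_left hw hq h), one_div_div, min_eq_right h]

lemma one_div_max_abs_crossRatio {a b a' b' : ℝ} (hab : a ≠ b) (hab' : a ≠ b') (ha'b : a' ≠ b)
    (ha'b' : a' ≠ b') :
    1 / max |crossRatio a b a' b'| |crossRatio a b' a' b| =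
      min |(a - b') * (a' - b)| |(a - b) * (a' - b')| / |(a - a') * (b - b')| := by
  have hcross : crossRatio a b a' b' = -((a - a') * (b - b') / ((a - b') * (a' - b))) := by
    rw [crossRatio, ← div_neg]
    congr 1 <;> ring
  have hcross' : crossRatio a b' a' b = (a - a') * (b - b') / ((a - b) * (a' - b')) := by
    rw [crossRatio, ← neg_div_neg_eq]
    congr 1 <;> ring
  rw [hcross, hcross', abs_neg, abs_div, abs_div]
  exact one_div_max_div_div (abs_pos.2 (mul_ne_zero (sub_ne_zero.2 hab') (sub_ne_zero.2 ha'b)))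
    (abs_pos.2 (mul_ne_zero (sub_ne_zero.2 hab) (sub_ne_zero.2 ha'b'))) (abs_nonneg _)

lemma relHeight_eq_min_div (hα : IsQuadIrr α) (hβ : IsQuadIrr β) (hne : β ≠ α)
    (hne' : β ≠ galConj α) :
    relHeight α β =
      min |(α - galConj β) * (galConj α - β)| |(α - β) * (galConj α - galConj β)| /
        |(α - galConj α) * (β - galConj β)| := by
  have hconj : α ≠ galConj β := fun h => hne' ((hα.galConj_eq_comm hβ).2 h).symm
  have hconj' : galConj α ≠ galConj β := (hα.galConj_inj hβ).not.2 hne.symm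
  exact one_div_max_abs_crossRatio hne.symm hconj hne'.symm hconj'

lemma abs_le_add_one_mul_of_min_le {p q : ℝ} (h : min |p| |q| ≤ s * |p - q|) :
    |p| ≤ (s + 1) * |p - q| ∧ |q| ≤ (s + 1) * |p - q| := by
  have hp := abs_sub_abs_le_abs_sub p q
  have hq := abs_sub_abs_le_abs_sub q p
  have hpq := abs_nonneg (p - q)
  rw [abs_sub_comm q p] at hq
  rcases min_le_iff.1 h with h | h <;> constructor <;> linarith

lemma abs_mul_le_of_relHeight_le (hα : IsQuadIrr α) (hβ : IsQuadIrr β) (hne : β ≠ α)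
    (hne' : β ≠ galConj α) (hs : relHeight α β ≤ s) :
    |(α - galConj β) * (galConj α - β)| ≤ (s + 1) * |(α - galConj α) * (β - galConj β)| ∧
      |(α - β) * (galConj α - galConj β)| ≤ (s + 1) * |(α - galConj α) * (β - galConj β)| := by
  have hpos : 0 < |(α - galConj α) * (β - galConj β)| :=
    abs_pos.2 (mul_ne_zero (sub_ne_zero.2 hα.galConj_ne.symm) (sub_ne_zero.2 hβ.galConj_ne.symm))
  have hsub : (α - galConj α) * (β - galConj β) =
      (α - β) * (galConj α - galConj β) - (α - galConj β) * (galConj α - β) := by ring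
  rw [relHeight_eq_min_div hα hβ hne hne', div_le_iff₀ hpos] at hs
  rw [hsub, abs_sub_comm] at hs ⊢
  exact abs_le_add_one_mul_of_min_le hs

namespace BinQuadForm.HasIrrationalRoot

variable {f : BinQuadForm}

lemma eval_mul_eval (h : f.HasIrrationalRoot β) (x y : ℝ) :
    f.eval x * f.eval y =
      (f.a * ((x - galConj β) * (y - β))) * (f.a * ((x - β) * (y - galConj β))) := by
  rw [h.eval_eq_mul, h.eval_eq_mul]
  ring

lemma polar_eq_add (h : f.HasIrrationalRoot β) (x y : ℝ) :
    f.polar x y = f.a * ((x - galConj β) * (y - β)) + f.a * ((x - β) * (y - galConj β)) := by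
  rw [polar, h.b_eq, h.c_eq]
  ring

lemma abs_eval_mul_eval_le_and_abs_polar_le (hf : f.HasIrrationalRoot β) (hα : IsQuadIrr α)
    (hne : β ≠ α) (hne' : β ≠ galConj α) (hs : relHeight α β ≤ s) :
    |f.eval α * f.eval (galConj α)| ≤ ((s + 1) * (√(f.discr : ℝ) * |α - galConj α|)) ^ 2 ∧
      |f.polar α (galConj α)| ≤ 2 * ((s + 1) * (√(f.discr : ℝ) * |α - galConj α|)) := by
  set K := (s + 1) * (√(f.discr : ℝ) * |α - galConj α|) with hK
  obtain ⟨hp, hq⟩ := abs_mul_le_of_relHeight_le hα hf.isQuadIrr hne hne' hs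
  have hscale {t : ℝ} (ht : |t| ≤ (s + 1) * |(α - galConj α) * (β - galConj β)|) :
      |f.a * t| ≤ K := by
    calc |f.a * t| ≤ |(f.a : ℝ)| * ((s + 1) * |(α - galConj α) * (β - galConj β)|) := by
          rw [abs_mul]; gcongr
      _ = K := by rw [hK, hf.sqrt_discr_eq, abs_mul, abs_mul]; ring
  constructor
  · rw [hf.eval_mul_eval, abs_mul, sq]
    exact mul_le_mul (hscale hp) (hscale hq) (abs_nonneg _) ((abs_nonneg _).trans (hscale hp))
  · rw [hf.polar_eq_add, two_mul]
    exact (abs_add_le _ _).trans (add_le_add (hscale hp) (hscale hq))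

end BinQuadForm.HasIrrationalRoot

lemma finite_setOf_relHeight_le_abs_eval_mem_Icc (hα : IsQuadIrr α) (D : ℤ) (s E : ℝ) :
    {β | ∃ f : BinQuadForm, f.discr = D ∧ f.HasIrrationalRoot β ∧ β ≠ α ∧ β ≠ galConj α ∧
      relHeight α β ≤ s ∧ |f.eval α| ∈ Set.Icc 1 E}.Finite := by
  set K := (s + 1) * (√(D : ℝ) * |α - galConj α|)
  refine ((finite_setOf_abs_eval_le_abs_polar_le hα.galConj_ne.symm
    (max E (max (K ^ 2) (2 * K)))).biUnion
      fun f _ => f.finite_setOf_hasIrrationalRoot).subset ?_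
  rintro β ⟨f, rfl, hf, hne, hne', hs, hlower, hupper⟩
  obtain ⟨hmul, hpolar⟩ := hf.abs_eval_mul_eval_le_and_abs_polar_le hα hne hne' hs
  have hconj : |f.eval (galConj α)| ≤ K ^ 2 := by
    rw [abs_mul] at hmul
    exact (le_mul_of_one_le_left (abs_nonneg _) hlower).trans hmul
  exact Set.mem_biUnion ⟨hupper.trans (le_max_left _ _),
    hconj.trans (le_max_of_le_right (le_max_left _ _)),
    hpolar.trans (le_max_of_le_right (le_max_right _ _))⟩ hf

/-- The quadratic irrationals which are roots of an integral form of discriminant `D`: a union of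
orbits of `SL₂(ℤ)`. The form is not required to be primitive, so one quadratic irrational belongs
to several of these classes. -/
def quadIrrOfDiscr (D : ℤ) : Set ℝ :=
  {β | ∃ f : BinQuadForm, f.discr = D ∧ f.HasIrrationalRoot β}

lemma IsQuadIrr.exists_mobOrbit_subset_quadIrrOfDiscr (hβ : IsQuadIrr β) :
    ∃ D : ℤ, mobOrbit β ⊆ quadIrrOfDiscr D := by
  obtain ⟨f, hf⟩ := hβ.exists_hasIrrationalRoot
  refine ⟨f.discr, ?_⟩
  rintro _ ⟨A, rfl⟩
  exact ⟨f.map A, discr_map A f, hf.map A⟩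

lemma mob_ne_and_mob_ne_and_relHeight_mob_eq (hα : IsQuadIrr α) (hβ : IsQuadIrr β) (hne : β ≠ α)
    (hne' : β ≠ galConj α) {A : SL(2, ℤ)} (hA : mob A α = α) :
    mob A β ≠ α ∧ mob A β ≠ galConj α ∧ relHeight α (mob A β) = relHeight α β := by
  refine ⟨fun h => hne ?_, fun h => hne' ?_, relHeight_mob_of_fixed hα hβ hA⟩
  · rwa [← mob_inj (A := A) hβ.1 hα.1, hA]
  · rwa [← mob_inj (A := A) hβ.1 hα.irrational_galConj, hα.mob_galConj_of_fixed hA]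

lemma exists_finset_of_mem_quadIrrOfDiscr_of_relHeight_le (hα : IsQuadIrr α) (D : ℤ) (s : ℝ) :
    ∃ T : Finset ℝ, ∀ β ∈ quadIrrOfDiscr D, β ≠ α → β ≠ galConj α → relHeight α β ≤ s →
      ∃ β' ∈ T, ∃ A : SL(2, ℤ), mob A α = α ∧ mob A β' = β := by
  obtain ⟨g, hg⟩ := hα.exists_hasIrrationalRoot
  obtain ⟨M, hM, hden⟩ := hg.exists_fixing_one_lt_mobDenom
  have hfin := finite_setOf_relHeight_le_abs_eval_mem_Icc hα D s (mobDenom M α ^ 2)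
  refine ⟨hfin.toFinset, ?_⟩
  rintro β ⟨f, hD, hf⟩ hne hne' hs
  have hconj : α ≠ galConj β := fun h => hne' ((hα.galConj_eq_comm hf.isQuadIrr).2 h).symm
  obtain ⟨k, hk⟩ :=
    exists_zpow_abs_eval_map_mem_Icc hα.1 hM hden (hf.eval_ne_zero hne.symm hconj)
  have hfix := (mob_zpow_and_mobDenom_zpow_of_fixed hα.1 hM k).1
  obtain ⟨hmob, hmob', hheight⟩ :=
    mob_ne_and_mob_ne_and_relHeight_mob_eq hα hf.isQuadIrr hne hne' hfix
  refine ⟨mob (M ^ k) β, hfin.mem_toFinset.2 ?_, (M ^ k)⁻¹, mob_inv_of_fixed hα.1 hfix,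
    mob_inv_mob _ hf.irrational⟩
  exact ⟨f.map (M ^ k), (discr_map _ f).trans hD, hf.map _, hmob, hmob', hheight.trans_le hs, hk⟩

end RelHeight

theorem relHeight_invariant_and_proper_general {α : ℝ} (hα : IsQuadIrr α) (D : ℤ) :
    (∀ A : Matrix.SpecialLinearGroup (Fin 2) ℤ, mob A α = α →
      ∀ β ∈ quadIrrOfDiscr D, β ≠ α → β ≠ galConj α →
        (mob A β ≠ α ∧ mob A β ≠ galConj α ∧ relHeight α (mob A β) = relHeight α β)) ∧
    (∀ s : ℝ, ∃ T : Finset ℝ,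
      ∀ β ∈ quadIrrOfDiscr D, β ≠ α → β ≠ galConj α → relHeight α β ≤ s →
        ∃ β' ∈ T, ∃ A : Matrix.SpecialLinearGroup (Fin 2) ℤ,
          mob A α = α ∧ mob A β' = β) :=
  ⟨fun _ hA _ ⟨_, _, hf⟩ hne hne' =>
      mob_ne_and_mob_ne_and_relHeight_mob_eq hα hf.isQuadIrr hne hne' hA,
    exists_finset_of_mem_quadIrrOfDiscr_of_relHeight_le hα D⟩

/-- Parkkonen-Paulin: `H_{α₀}` is a proper height function on
`PSL₂(ℤ)·β₀ ∖ {α₀, α₀^σ}` modulo the action of the stabiliser `PSL₂(ℤ)_{α₀}` of `α₀`: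
(i) `H_{α₀}` is invariant under `PSL₂(ℤ)_{α₀}` (which preserves
`PSL₂(ℤ)·β₀ ∖ {α₀, α₀^σ}`), and (ii) for every `s > 0`, the sublevel set
`{β ∈ PSL₂(ℤ)·β₀ ∖ {α₀, α₀^σ} : H_{α₀}(β) ≤ s}` meets only finitely many orbits of
`PSL₂(ℤ)_{α₀}`. -/
theorem relHeight_invariant_and_proper (α₀ β₀ : ℝ)
    (hα₀ : IsQuadIrr α₀) (hβ₀ : IsQuadIrr β₀) :
    (∀ A : Matrix.SpecialLinearGroup (Fin 2) ℤ, mob A α₀ = α₀ →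
      ∀ β : ℝ, β ∈ mobOrbit β₀ → β ≠ α₀ → β ≠ galConj α₀ →
        (mob A β ≠ α₀ ∧ mob A β ≠ galConj α₀ ∧ relHeight α₀ (mob A β) = relHeight α₀ β)) ∧
    (∀ s : ℝ, 0 < s → ∃ T : Finset ℝ,
      ∀ β : ℝ, β ∈ mobOrbit β₀ → β ≠ α₀ → β ≠ galConj α₀ → relHeight α₀ β ≤ s →
        ∃ β' ∈ T, ∃ A : Matrix.SpecialLinearGroup (Fin 2) ℤ,
          mob A α₀ = α₀ ∧ mob A β' = β) := by
  obtain ⟨D, hD⟩ := hβ₀.exists_mobOrbit_subset_quadIrrOfDiscr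
  obtain ⟨hinv, hproper⟩ := relHeight_invariant_and_proper_general hα₀ D
  exact ⟨fun A hA β hβ => hinv A hA β (hD hβ),
    fun s _ => (hproper s).imp fun T hT β hβ => hT β (hD hβ)⟩
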